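/- Let f ∈ C_{≤d} be such that Δ_C(f) lies in the K-submodule C_{≤d} ⊗ C_{≤d−1} + C_{≤d−1} ⊗ C_{≤d} + [det−1] ⊗ C + C ⊗ [det−1] of C ⊗_K C. Then f ∈ C_{≤d−1} + [det−1]. -/

import Mathlib

open MvPolynomial

/-- Variables of the differential polynomial ring `C = K{c₁₁, c₁₂, c₂₁, c₂₂}`:
the variable `((i, j), n)` represents `c_{ij}^{(n)}`, the `n`-th derivative of `c_{ij}`. -/
abbrev DVar : Type := (Fin 2 × Fin 2) × ℕ

/-- The differential polynomial ring `C = K{c₁₁, c₁₂, c₂₁, c₂₂}`. -/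
abbrev DiffPolyC (K : Type) [CommRing K] : Type := MvPolynomial DVar K

/-- `det = c₁₁·c₂₂ − c₁₂·c₂₁`. -/
noncomputable def detC (K : Type) [CommRing K] : DiffPolyC K :=
  X ((0, 0), 0) * X ((1, 1), 0) - X ((0, 1), 0) * X ((1, 0), 0)

/-- `D : C → C` is the unique derivation extending the derivation `δ` of `K` and shifting
variables, i.e. `D(c_{ij}^{(n)}) = c_{ij}^{(n+1)}`. -/
def IsDiffStructure {K : Type} [CommRing K] (δ : K → K) (D : DiffPolyC K → DiffPolyC K) : Prop :=
  (∀ a b : K, δ (a + b) = δ a + δ b) ∧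
  (∀ a b : K, δ (a * b) = δ a * b + a * δ b) ∧
  (∀ f g : DiffPolyC K, D (f + g) = D f + D g) ∧
  (∀ f g : DiffPolyC K, D (f * g) = D f * g + f * D g) ∧
  (∀ a : K, D (C a) = C (δ a)) ∧
  (∀ v : DVar, D (X v) = X (v.1, v.2 + 1))

open TensorProduct in
/-- The comultiplication `Δ_C : C → C ⊗_K C`: the unique `K`-algebra homomorphism with
`Δ_C(c_{ij}^{(n)}) = Σ_{k} Σ_{m ≤ n} (n choose m) · c_{ik}^{(m)} ⊗ c_{kj}^{(n−m)}`. -/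
noncomputable def deltaC (K : Type) [CommRing K] :
    DiffPolyC K →ₐ[K] (DiffPolyC K ⊗[K] DiffPolyC K) :=
  aeval fun v : DVar =>
    ∑ k : Fin 2, ∑ m ∈ Finset.range (v.2 + 1),
      (v.2.choose m) •
        ((X ((v.1.1, k), m) : DiffPolyC K) ⊗ₜ[K] (X ((k, v.1.2), v.2 - m) : DiffPolyC K))

open TensorProduct in
/-- The `K`-submodule `p ⊗ q` of `C ⊗_K C` (the span of the pure tensors `a ⊗ b`,
`a ∈ p`, `b ∈ q`). -/
noncomputable def tensorSub {K : Type} [CommRing K] (p q : Submodule K (DiffPolyC K)) :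
    Submodule K (DiffPolyC K ⊗[K] DiffPolyC K) :=
  Submodule.span K {z | ∃ a ∈ p, ∃ b ∈ q, z = a ⊗ₜ[K] b}

/-!
Write `f_d` for the component of `f` of degree `d`; the point is that `f_d ∈ [det]`. Modulo
`C_{≤d-1} + [det-1]` the homogeneous elements of `[det]` of degree `d` vanish, since each
`g * ∂ⁿ det` is congruent to `g` or to `0` there.

Evaluate the hypothesis at a pair of matrices of power series `(t⁻¹ A, t⁻¹ B)`, where
`det A = det B = t²`. The terms in `[det-1]` vanish, the others have a pole at `t = 0` of order at
most `2d-1`, while `f (t⁻² A B)` is `t^{-2d} f_d(A B)` up to poles of order at most `2d-2`. Hence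
`f_d(A B)` vanishes at `t = 0`, so `f_d` vanishes at the generic singular matrix: the one with
independent differential indeterminates `c₁₁, c₁₂, c₂₂` and `c₂₁ = c₁₁ c₂₂ / c₁₂`.

The relations `∂ⁿ det = 0` express `c₂₁^{(n)}` through the other variables after multiplication by
powers of `c₁₂`, so `c₁₂^N f_d ∈ [det]` for some `N`. Finally `c₁₂` is a nonzerodivisor modulo
`[det]`: for a suitable order on monomials the leading monomials of the `∂ⁿ det` are pairwise
coprime and free of `c₁₂`, and replacing them by the `∂ⁿ det` is a linear automorphism of `C` that
commutes with multiplication by `c₁₂` and carries the monomial ideal they generate onto `[det]`.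
-/

open Finset.HasAntidiagonal (antidiagonal mem_antidiagonal)

section Unipotent

variable {R M : Type*} [CommRing R] [AddCommGroup M] [Module R M]

theorem bijective_of_maxGenEigenspace_one_eq_top {f : Module.End R M}
    (hf : f.maxGenEigenspace 1 = ⊤) : Function.Bijective f := by
  have exists_pow_eq_zero : ∀ x, ∃ k : ℕ, ((1 - f) ^ k) x = 0 := fun x ↦ by
    obtain ⟨k, hk⟩ := (f.mem_maxGenEigenspace 1 x).mp (hf ▸ Submodule.mem_top)
    refine ⟨k, ?_⟩
    rw [← neg_sub, neg_pow, Module.End.mul_apply, ← one_smul R (1 : Module.End R M), hk, map_zero]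
  constructor
  · rw [injective_iff_map_eq_zero]
    intro x hx
    obtain ⟨k, hk⟩ := exists_pow_eq_zero x
    have inverse_mul := LinearMap.congr_fun (geom_sum_mul_neg (1 - f) k) x
    simpa [hx, hk] using inverse_mul.symm
  · intro x
    obtain ⟨k, hk⟩ := exists_pow_eq_zero x
    have mul_inverse := LinearMap.congr_fun (mul_neg_geom_sum (1 - f) k) x
    exact ⟨(∑ i ∈ Finset.range k, (1 - f) ^ i) x, by simpa [hk] using mul_inverse⟩

end Unipotent

theorem map_mem_span_range {R A ι : Type*} [CommRing R] [CommRing A] [Algebra R A]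
    (T : A →ₗ[R] A) {a b : ι → A} (hT : ∀ i x, T (a i * x) = b i * T x) {x : A}
    (hx : x ∈ Ideal.span (Set.range a)) : T x ∈ Ideal.span (Set.range b) := by
  obtain ⟨c, rfl⟩ := Finsupp.mem_ideal_span_range_iff_exists_finsupp.mp hx
  rw [Finsupp.sum, map_sum]
  refine Ideal.sum_mem _ fun i _ ↦ ?_
  rw [mul_comm, hT]
  exact Ideal.mul_mem_right _ _ (Ideal.subset_span ⟨i, rfl⟩)

section CoprimeMonomials

variable {ι σ : Type*}

/-- The exponent vectors `L i` are those of pairwise coprime nonconstant monomials. -/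
structure ArePairwiseCoprime (L : ι → σ →₀ ℕ) : Prop where
  ne_zero : ∀ i, L i ≠ 0
  disjoint : Pairwise fun i j ↦ Disjoint (L i).support (L j).support

/-- The monomial with exponent vector `s` is standard: none of the monomials `L i` divides it. -/
def IsStandard (L : ι → σ →₀ ℕ) (s : σ →₀ ℕ) : Prop := ∀ i, ¬ L i ≤ s

variable {L : ι → σ →₀ ℕ}

theorem IsStandard.single_add {s : σ →₀ ℕ} (hs : IsStandard L s) {z : σ} (hz : ∀ i, L i z = 0) :
    IsStandard L (Finsupp.single z 1 + s) := by
  intro i hi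
  refine hs i fun v ↦ ?_
  obtain rfl | hv := eq_or_ne v z
  · simp [hz]
  · simpa [Finsupp.single_eq_of_ne hv] using hi v

theorem exists_linearCombination_add_isStandard (hL : ∀ i, L i ≠ 0) (m : σ →₀ ℕ) :
    ∃ α s, IsStandard L s ∧ Finsupp.linearCombination ℕ L α + s = m := by
  induction h : m.degree using Nat.strong_induction_on generalizing m with | _ n ih
  by_cases hm : IsStandard L m
  · exact ⟨0, m, hm, by simp⟩
  obtain ⟨i, hi⟩ : ∃ i, L i ≤ m := by simpa [IsStandard] using hm
  obtain ⟨m, rfl⟩ := exists_add_of_le hi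
  have degree_lt : m.degree < n := by
    have := (Finsupp.degree_eq_zero_iff (L i)).not.mpr (hL i)
    rw [map_add] at h
    omega
  obtain ⟨α, s, hs, rfl⟩ := ih _ degree_lt m rfl
  exact ⟨Finsupp.single i 1 + α, s, hs, by simp [add_assoc]⟩

theorem linearCombination_apply_of_mem_support
    (hL : Pairwise fun i j ↦ Disjoint (L i).support (L j).support) (α : ι →₀ ℕ) {i : ι} {v : σ}
    (hv : v ∈ (L i).support) : Finsupp.linearCombination ℕ L α v = α i * L i v := by
  rw [Finsupp.linearCombination_apply, Finsupp.sum, Finsupp.finsetSum_apply,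
    Finset.sum_eq_single i]
  · rfl
  · intro j _ hji
    have : L j v = 0 := Finsupp.notMem_support_iff.mp (Finset.disjoint_left.mp (hL hji.symm) hv)
    simp [this]
  · intro hi
    simp [Finsupp.notMem_support_iff.mp hi]

theorem le_of_linearCombination_add_eq
    (hL : Pairwise fun i j ↦ Disjoint (L i).support (L j).support) {α β : ι →₀ ℕ} {s t : σ →₀ ℕ}
    (ht : IsStandard L t)
    (h : Finsupp.linearCombination ℕ L α + s = Finsupp.linearCombination ℕ L β + t) : α ≤ β := by
  intro i
  by_contra! hlt
  refine ht i fun v ↦ ?_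
  by_cases hv : v ∈ (L i).support
  · have key := DFunLike.congr_fun h v
    simp only [Finsupp.add_apply, linearCombination_apply_of_mem_support hL _ hv] at key
    have := Nat.mul_le_mul_right (L i v) (Nat.succ_le_of_lt hlt)
    rw [Nat.succ_mul] at this
    omega
  · simp [Finsupp.notMem_support_iff.mp hv]

/-- The unique factorization of a monomial as a product of powers of the pairwise coprime
monomials `L i` and a standard monomial. -/
noncomputable def standardFactorization (hL : ArePairwiseCoprime L) :
    (ι →₀ ℕ) × {s // IsStandard L s} ≃ (σ →₀ ℕ) :=
  Equiv.ofBijective (fun x ↦ Finsupp.linearCombination ℕ L x.1 + x.2) <| by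
    refine ⟨fun ⟨α, s, hs⟩ ⟨β, t, ht⟩ h ↦ ?_, fun m ↦ ?_⟩
    · obtain rfl : α = β := (le_of_linearCombination_add_eq hL.disjoint ht h).antisymm
        (le_of_linearCombination_add_eq hL.disjoint hs h.symm)
      obtain rfl : s = t := add_left_cancel h
      rfl
    · obtain ⟨α, s, hs, rfl⟩ := exists_linearCombination_add_isStandard hL.ne_zero m
      exact ⟨(α, ⟨s, hs⟩), rfl⟩

theorem standardFactorization_apply (hL : ArePairwiseCoprime L)
    (x : (ι →₀ ℕ) × {s // IsStandard L s}) :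
    standardFactorization hL x = Finsupp.linearCombination ℕ L x.1 + x.2 := rfl

variable {R : Type*} [CommRing R]

theorem isSMulRegular_quotient_span_monomial {z : σ} (hz : ∀ i, L i z = 0) :
    IsSMulRegular (MvPolynomial σ R ⧸ Ideal.span (Set.range fun i ↦ monomial (L i) (1 : R)))
      (X z : MvPolynomial σ R) := by
  rw [isSMulRegular_quotient_iff_mem_of_smul_mem]
  intro g hg
  rw [Set.range_comp' (fun s ↦ monomial s (1 : R)) L, mem_ideal_span_monomial_image] at hg ⊢
  intro m hm
  obtain ⟨_, ⟨i, rfl⟩, hi⟩ := hg (Finsupp.single z 1 + m) <| by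
    rw [mem_support_iff, smul_eq_mul, coeff_X_mul]
    exact mem_support_iff.mp hm
  refine ⟨_, ⟨i, rfl⟩, fun v ↦ ?_⟩
  obtain rfl | hv := eq_or_ne v z
  · simp [hz]
  · simpa [Finsupp.single_eq_of_ne hv] using hi v

/-- The `R`-linear endomorphism that sends `∏ (L i) ^ α i * s`, where `s` is a standard monomial,
to `∏ (E i) ^ α i * s`. When `L i` is the leading monomial of `E i`, it carries the ideal `(L i)ᵢ`
onto the ideal `(E i)ᵢ`. -/
noncomputable def replaceMonomials (hL : ArePairwiseCoprime L) (E : ι → MvPolynomial σ R) :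
    Module.End R (MvPolynomial σ R) :=
  ((basisMonomials σ R).reindex (standardFactorization hL).symm).constr R fun x ↦
    (x.1.prod fun i k ↦ E i ^ k) * monomial x.2 1

theorem replaceMonomials_monomial (hL : ArePairwiseCoprime L) (E : ι → MvPolynomial σ R)
    (α : ι →₀ ℕ) {s : σ →₀ ℕ} (hs : IsStandard L s) :
    replaceMonomials hL E (monomial (Finsupp.linearCombination ℕ L α + s) 1) =
      (α.prod fun i k ↦ E i ^ k) * monomial s 1 := by
  have := ((basisMonomials σ R).reindex (standardFactorization hL).symm).constr_basis R
    (fun x ↦ (x.1.prod fun i k ↦ E i ^ k) * monomial x.2.1 1) (α, ⟨s, hs⟩)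
  simpa [replaceMonomials, standardFactorization_apply] using this

theorem linearMap_ext_of_isStandard {M : Type*} [AddCommMonoid M] [Module R M]
    (hL : ∀ i, L i ≠ 0) {f g : MvPolynomial σ R →ₗ[R] M}
    (h : ∀ α s, IsStandard L s →
      f (monomial (Finsupp.linearCombination ℕ L α + s) 1) =
        g (monomial (Finsupp.linearCombination ℕ L α + s) 1)) : f = g := by
  refine (basisMonomials σ R).ext fun m ↦ ?_
  obtain ⟨α, s, hs, rfl⟩ := exists_linearCombination_add_isStandard hL m
  simpa using h α s hs

theorem replaceMonomials_monomial_mul (hL : ArePairwiseCoprime L) (E : ι → MvPolynomial σ R)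
    (i : ι) (f : MvPolynomial σ R) :
    replaceMonomials hL E (monomial (L i) 1 * f) = E i * replaceMonomials hL E f := by
  suffices replaceMonomials hL E ∘ₗ LinearMap.mulLeft R (monomial (L i) 1) =
      LinearMap.mulLeft R (E i) ∘ₗ replaceMonomials hL E from LinearMap.congr_fun this f
  refine linearMap_ext_of_isStandard hL.ne_zero fun α s hs ↦ ?_
  have absorb : L i + (Finsupp.linearCombination ℕ L α + s) =
      Finsupp.linearCombination ℕ L (Finsupp.single i 1 + α) + s := by
    simp [add_assoc]
  simp only [LinearMap.comp_apply, LinearMap.mulLeft_apply, monomial_mul, one_mul, absorb,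
    replaceMonomials_monomial _ _ _ hs]
  rw [Finsupp.prod_add_index' (by simp) (by simp [pow_add]), Finsupp.prod_single_index (by simp),
    pow_one, mul_assoc]

theorem replaceMonomials_X_mul (hL : ArePairwiseCoprime L) (E : ι → MvPolynomial σ R)
    {z : σ} (hz : ∀ i, L i z = 0) (f : MvPolynomial σ R) :
    replaceMonomials hL E (X z * f) = X z * replaceMonomials hL E f := by
  suffices replaceMonomials hL E ∘ₗ LinearMap.mulLeft R (X z) =
      LinearMap.mulLeft R (X z) ∘ₗ replaceMonomials hL E from LinearMap.congr_fun this f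
  refine linearMap_ext_of_isStandard hL.ne_zero fun α s hs ↦ ?_
  simp only [LinearMap.comp_apply, LinearMap.mulLeft_apply, X, monomial_mul, one_mul,
    add_left_comm (Finsupp.single z 1), replaceMonomials_monomial _ _ _ hs,
    replaceMonomials_monomial _ _ _ (hs.single_add hz)]
  rw [mul_left_comm, monomial_mul, one_mul]

end CoprimeMonomials

section LeadingMonomials

variable {ι σ R : Type*} [CommRing R] {r : (σ →₀ ℕ) → (σ →₀ ℕ) → Prop}

/-- A well-founded strict order on monomials compatible with multiplication. Unlike for a
`MonomialOrder`, two monomials need not be comparable. -/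
structure IsMonomialLT (r : (σ →₀ ℕ) → (σ →₀ ℕ) → Prop) : Prop where
  wf : WellFounded r
  trans : ∀ {a b c}, r a b → r b c → r a c
  add_left : ∀ {a b} (c), r a b → r (c + a) (c + b)

theorem IsMonomialLT.add_right (hr : IsMonomialLT r) {a b : σ →₀ ℕ} (c : σ →₀ ℕ) (h : r a b) :
    r (a + c) (b + c) := by
  simpa only [add_comm _ c] using hr.add_left c h

/-- The monomial `m` occurs in `f` with coefficient one and every other monomial of `f` is
`r`-smaller than `m`. -/
def HasLeadingMonomial (r : (σ →₀ ℕ) → (σ →₀ ℕ) → Prop) (m : σ →₀ ℕ) (f : MvPolynomial σ R) :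
    Prop :=
  f - monomial m 1 ∈ restrictSupport R {m' | r m' m}

theorem hasLeadingMonomial_monomial (r : (σ →₀ ℕ) → (σ →₀ ℕ) → Prop) (m : σ →₀ ℕ) :
    HasLeadingMonomial r m (monomial m (1 : R)) := by
  simp [HasLeadingMonomial]

open Pointwise in
theorem HasLeadingMonomial.mul (hr : IsMonomialLT r) {m n : σ →₀ ℕ} {f g : MvPolynomial σ R}
    (hf : HasLeadingMonomial r m f) (hg : HasLeadingMonomial r n g) :
    HasLeadingMonomial r (m + n) (f * g) := by
  have mul_mem {S T : Set (σ →₀ ℕ)} (hST : S + T ⊆ {m' | r m' (m + n)}) {a b : MvPolynomial σ R}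
      (ha : a ∈ restrictSupport R S) (hb : b ∈ restrictSupport R T) :
      a * b ∈ restrictSupport R {m' | r m' (m + n)} :=
    restrictSupport_mono R hST (restrictSupport_add R S T ▸ Submodule.mul_mem_mul ha hb)
  have monomial_mem (k : σ →₀ ℕ) : monomial k (1 : R) ∈ restrictSupport R {k} := by simp
  have expand : f * g - monomial (m + n) 1 = (f - monomial m 1) * (g - monomial n 1) +
      (f - monomial m 1) * monomial n 1 + monomial m 1 * (g - monomial n 1) := by
    rw [← one_mul (1 : R), ← monomial_mul, one_mul]
    ring
  rw [HasLeadingMonomial, expand]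
  refine add_mem (add_mem (mul_mem ?_ hf hg) (mul_mem ?_ hf (monomial_mem n)))
    (mul_mem ?_ (monomial_mem m) hg)
  · rintro _ ⟨a, ha, b, hb, rfl⟩
    exact hr.trans (hr.add_left a hb) (hr.add_right n ha)
  · rintro _ ⟨a, ha, _, rfl, rfl⟩
    exact hr.add_right _ ha
  · rintro _ ⟨_, rfl, b, hb, rfl⟩
    exact hr.add_left _ hb

theorem HasLeadingMonomial.pow (hr : IsMonomialLT r) {m : σ →₀ ℕ} {f : MvPolynomial σ R}
    (hf : HasLeadingMonomial r m f) (k : ℕ) : HasLeadingMonomial r (k • m) (f ^ k) := by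
  induction k with
  | zero => simpa using hasLeadingMonomial_monomial r 0
  | succ k ih => simpa only [succ_nsmul, pow_succ] using ih.mul hr hf

theorem HasLeadingMonomial.finsuppProd (hr : IsMonomialLT r) {L : ι → σ →₀ ℕ}
    {E : ι → MvPolynomial σ R} (hE : ∀ i, HasLeadingMonomial r (L i) (E i)) (α : ι →₀ ℕ) :
    HasLeadingMonomial r (Finsupp.linearCombination ℕ L α) (α.prod fun i k ↦ E i ^ k) := by
  induction α using Finsupp.induction_linear with
  | zero => simpa using hasLeadingMonomial_monomial r 0
  | add α β hα hβ =>
    rw [map_add, Finsupp.prod_add_index' (by simp) (by simp [pow_add])]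
    exact hα.mul hr hβ
  | single i k => simpa using (hE i).pow hr k

theorem bijective_of_forall_hasLeadingMonomial (hr : WellFounded r)
    {T : Module.End R (MvPolynomial σ R)}
    (hT : ∀ m, HasLeadingMonomial r m (T (monomial m 1))) : Function.Bijective T := by
  refine bijective_of_maxGenEigenspace_one_eq_top (eq_top_iff.mpr ?_)
  rw [← (basisMonomials σ R).span_eq, Submodule.span_le]
  rintro _ ⟨m, rfl⟩
  rw [coe_basisMonomials, SetLike.mem_coe]
  induction m using hr.induction with | _ m ih
  have lower_le : restrictSupport R {m' | r m' m} ≤ T.maxGenEigenspace 1 := by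
    rw [restrictSupport_eq_span, Submodule.span_le]
    rintro _ ⟨m', hm', rfl⟩
    exact ih m' hm'
  obtain ⟨k, hk⟩ := (T.mem_maxGenEigenspace 1 _).mp (lower_le (hT m))
  refine (T.mem_maxGenEigenspace 1 _).mpr ⟨k + 1, ?_⟩
  rw [pow_succ, Module.End.mul_apply]
  simpa using hk

variable {L : ι → σ →₀ ℕ} {E : ι → MvPolynomial σ R}

theorem replaceMonomials_bijective (hr : IsMonomialLT r) (hL : ArePairwiseCoprime L)
    (hE : ∀ i, HasLeadingMonomial r (L i) (E i)) :
    Function.Bijective (replaceMonomials hL E) := by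
  refine bijective_of_forall_hasLeadingMonomial hr.wf fun m ↦ ?_
  obtain ⟨α, s, hs, rfl⟩ := exists_linearCombination_add_isStandard hL.ne_zero m
  rw [replaceMonomials_monomial hL E α hs]
  exact (HasLeadingMonomial.finsuppProd hr hE α).mul hr (hasLeadingMonomial_monomial r s)

theorem isSMulRegular_quotient_span_of_hasLeadingMonomial (hr : IsMonomialLT r)
    (hL : ArePairwiseCoprime L) (hE : ∀ i, HasLeadingMonomial r (L i) (E i)) {z : σ}
    (hz : ∀ i, L i z = 0) :
    IsSMulRegular (MvPolynomial σ R ⧸ Ideal.span (Set.range E)) (X z : MvPolynomial σ R) := by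
  let T := LinearEquiv.ofBijective _ (replaceMonomials_bijective hr hL hE)
  have T_monomial_mul (i : ι) (g : MvPolynomial σ R) : T (monomial (L i) 1 * g) = E i * T g :=
    replaceMonomials_monomial_mul hL E i g
  have symm_mul (i : ι) (g : MvPolynomial σ R) :
      T.symm (E i * g) = monomial (L i) 1 * T.symm g := by
    rw [LinearEquiv.symm_apply_eq, T_monomial_mul, T.apply_symm_apply]
  rw [isSMulRegular_quotient_iff_mem_of_smul_mem]
  intro f hf
  obtain ⟨g, rfl⟩ := T.surjective f
  have hg : T (X z * g) ∈ Ideal.span (Set.range E) := by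
    simpa only [T, smul_eq_mul, LinearEquiv.ofBijective_apply,
      replaceMonomials_X_mul hL E hz] using hf
  refine map_mem_span_range T.toLinearMap T_monomial_mul ?_
  refine mem_of_isSMulRegular_quotient_of_smul_mem (isSMulRegular_quotient_span_monomial hz) ?_
  simpa using map_mem_span_range T.symm.toLinearMap symm_mul hg

end LeadingMonomials

section DetIdeal

/-- The position `2m + i - j` of the variable `c_{ij}^{(m)}`. The positions of the two factors of
each term of `∂ⁿ det` add up to `2n`, and they agree in exactly one term, its leading term. -/
def position (v : DVar) : ℤ := 2 * v.2 + (v.1.1 : ℕ) - (v.1.2 : ℕ)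

/-- The only variable in row `i` whose position is `n`. -/
def rowVar (i : Fin 2) (n : ℕ) : DVar := ((i, Fin.ofNat 2 (n + i)), (n + 1 - i) / 2)

theorem eq_rowVar_iff {v : DVar} {i : Fin 2} {n : ℕ} :
    v = rowVar i n ↔ v.1.1 = i ∧ position v = n := by
  obtain ⟨⟨i', j⟩, m⟩ := v
  simp only [rowVar, position, Prod.mk.injEq, Fin.ext_iff, Fin.ofNat]
  omega

/-- The sum of the squared positions of the variables of a monomial, with multiplicity. -/
noncomputable def spread : (DVar →₀ ℕ) →+ ℕ := Finsupp.weight fun v ↦ (position v).natAbs ^ 2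

/-- The sum of the orders of differentiation of the variables of a monomial. -/
noncomputable def diffOrder : (DVar →₀ ℕ) →+ ℕ := Finsupp.weight fun v : DVar ↦ v.2

/-- The order on monomials for which the leading monomials of the `∂ⁿ det` are pairwise coprime:
among those of equal degree and differential order, `m'` is smaller if its spread is larger. -/
def SpreadLT (m' m : DVar →₀ ℕ) : Prop :=
  m'.degree = m.degree ∧ diffOrder m' = diffOrder m ∧ spread m < spread m'

theorem spread_le (m : DVar →₀ ℕ) : spread m ≤ m.degree * (2 * diffOrder m + 1) ^ 2 := by
  rw [spread, Finsupp.weight_apply, Finsupp.sum, Finsupp.degree_apply, Finset.sum_mul]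
  refine Finset.sum_le_sum fun v hv ↦ ?_
  have order_le : v.2 ≤ diffOrder m := Finsupp.le_weight_of_ne_zero' (fun v : DVar ↦ v.2)
    (Finsupp.mem_support_iff.mp hv)
  rw [smul_eq_mul]
  gcongr
  rw [position]
  omega

theorem isMonomialLT_spreadLT : IsMonomialLT SpreadLT where
  wf := by
    refine Subrelation.wf (r := InvImage (· < ·) fun m : DVar →₀ ℕ ↦
      m.degree * (2 * diffOrder m + 1) ^ 2 - spread m) ?_ (InvImage.wf _ Nat.lt_wfRel.wf)
    rintro m' m ⟨degree_eq, order_eq, spread_lt⟩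
    have := spread_le m'
    simp only [InvImage, degree_eq, order_eq] at this ⊢
    omega
  trans := fun ⟨hd, ho, hs⟩ ⟨hd', ho', hs'⟩ ↦ ⟨hd.trans hd', ho.trans ho', hs'.trans hs⟩
  add_left := fun c ⟨hd, ho, hs⟩ ↦ by
    simpa only [SpreadLT, map_add, add_right_inj, add_lt_add_iff_left] using ⟨hd, ho, hs⟩

/-- The leading monomial of `∂ⁿ det`: the product of its two variables of position `n`. -/
noncomputable def detLeading (n : ℕ) : DVar →₀ ℕ :=
  Finsupp.single (rowVar 0 n) 1 + Finsupp.single (rowVar 1 n) 1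

theorem position_of_mem_support_detLeading {n : ℕ} {v : DVar} (hv : v ∈ (detLeading n).support) :
    position v = n := by
  obtain hv | hv := Finset.mem_union.mp (Finsupp.support_add hv)
  all_goals
    obtain rfl := Finset.mem_singleton.mp (Finsupp.support_single_subset hv)
    exact (eq_rowVar_iff.mp rfl).2

theorem arePairwiseCoprime_detLeading : ArePairwiseCoprime detLeading where
  ne_zero n h := by simpa [detLeading] using DFunLike.congr_fun h (rowVar 0 n)
  disjoint m n hmn := Finset.disjoint_left.mpr fun v hm hn ↦ hmn <| by
    exact_mod_cast (position_of_mem_support_detLeading hm).symm.trans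
      (position_of_mem_support_detLeading hn)

theorem spreadLT_detLeading {v w : DVar} {n : ℕ} (horder : v.2 + w.2 = n)
    (hposition : position v + position w = 2 * n) (hv : position v ≠ n) :
    SpreadLT (Finsupp.single v 1 + Finsupp.single w 1) (detLeading n) := by
  have position_row (i : Fin 2) : position (rowVar i n) = n := (eq_rowVar_iff.mp rfl).2
  refine ⟨by simp [detLeading], ?_, ?_⟩
  · simp only [detLeading, diffOrder, map_add, Finsupp.weight_single, one_smul, horder, rowVar]
    simp only [Fin.val_zero, Fin.val_one]
    omega
  · simp only [spread, detLeading, map_add, Finsupp.weight_single, one_smul, position_row]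
    zify
    rw [sq_abs, sq_abs, sq_abs]
    have := sq_pos_of_ne_zero (sub_ne_zero.mpr hv)
    rw [eq_sub_of_add_eq' hposition]
    linarith

section CommRing

variable (K : Type) [CommRing K]

/-- The `n`-th derivative `∂ⁿ det`, expanded by the Leibniz rule. -/
noncomputable def detDeriv (n : ℕ) : DiffPolyC K :=
  ∑ p ∈ antidiagonal n, n.choose p.1 •
    (X ((0, 0), p.1) * X ((1, 1), p.2) - X ((0, 1), p.1) * X ((1, 0), p.2))

/-- The differential ideal `[det]`. -/
noncomputable def detIdeal : Ideal (DiffPolyC K) := Ideal.span (Set.range (detDeriv K))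

/-- The coefficient of the leading monomial of `∂ⁿ det`. -/
def detLeadingCoeff (n : ℕ) : K := (-1) ^ n * n.choose ((n + 1) / 2)

variable {K}

theorem detDeriv_eq_sum_monomial (n : ℕ) : detDeriv K n =
    ∑ x ∈ (Finset.univ : Finset (Fin 2)) ×ˢ antidiagonal n,
      ((-1) ^ (x.1 : ℕ) * n.choose x.2.1 : K) • monomial (Finsupp.single ((0, x.1), x.2.1) 1 +
        Finsupp.single ((1, x.1.rev), x.2.2) 1 : DVar →₀ ℕ) (1 : K) := by
  rw [Finset.sum_product_right, detDeriv]
  refine Finset.sum_congr rfl fun p _ ↦ ?_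
  simp [X, monomial_mul, Fin.sum_univ_two, sub_eq_add_neg,
    ← Nat.cast_smul_eq_nsmul K]

theorem detDeriv_sub_leading_mem (n : ℕ) :
    detDeriv K n - detLeadingCoeff K n • monomial (detLeading n) 1 ∈
      restrictSupport K {m | SpreadLT m (detLeading n)} := by
  let leadingIndex : Fin 2 × ℕ × ℕ := (Fin.ofNat 2 n, (n + 1) / 2, n / 2)
  have leadingIndex_mem : leadingIndex ∈ Finset.univ ×ˢ antidiagonal n := by
    simp only [leadingIndex, Finset.mem_product, Finset.mem_univ, mem_antidiagonal, true_and]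
    omega
  have leadingIndex_row : (((0, leadingIndex.1), leadingIndex.2.1) : DVar) = rowVar 0 n ∧
      (((1, leadingIndex.1.rev), leadingIndex.2.2) : DVar) = rowVar 1 n := by
    simp only [eq_rowVar_iff, position, leadingIndex, Fin.ofNat, Fin.val_rev, Fin.val_zero,
      Fin.val_one, true_and]
    omega
  have leadingIndex_coeff : (-1) ^ (leadingIndex.1 : ℕ) * (n.choose leadingIndex.2.1 : K) =
      detLeadingCoeff K n := by
    simp [leadingIndex, detLeadingCoeff, Fin.ofNat, ← neg_one_pow_eq_pow_mod_two]
  rw [detDeriv_eq_sum_monomial, ← Finset.add_sum_erase _ _ leadingIndex_mem,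
    leadingIndex_row.1, leadingIndex_row.2, leadingIndex_coeff, detLeading, add_sub_cancel_left]
  refine sum_mem fun x hx ↦ Submodule.smul_mem _ _ ?_
  obtain ⟨hne, hx⟩ := Finset.mem_erase.mp hx
  obtain ⟨j, a, b⟩ := x
  simp only [Finset.mem_product, Finset.mem_univ, mem_antidiagonal, true_and] at hx
  rw [monomial_mem_restrictSupport]
  refine Or.inl (spreadLT_detLeading hx ?_ fun h ↦ hne ?_)
  · simp only [position, Fin.val_rev, Fin.val_zero, Fin.val_one]
    omega
  · have := (eq_rowVar_iff.mpr ⟨rfl, h⟩).trans leadingIndex_row.1.symm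
    simp only [leadingIndex, Prod.mk.injEq, true_and] at this ⊢
    omega

end CommRing

variable {K : Type} [Field K] [CharZero K]

theorem detLeadingCoeff_ne_zero (n : ℕ) : detLeadingCoeff K n ≠ 0 :=
  mul_ne_zero (pow_ne_zero _ (neg_ne_zero.mpr one_ne_zero))
    (Nat.cast_ne_zero.mpr (Nat.choose_pos (by omega)).ne')

theorem hasLeadingMonomial_detDeriv (n : ℕ) :
    HasLeadingMonomial SpreadLT (detLeading n) ((detLeadingCoeff K n)⁻¹ • detDeriv K n) := by
  have := Submodule.smul_mem _ (detLeadingCoeff K n)⁻¹ (detDeriv_sub_leading_mem n)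
  rwa [smul_sub, inv_smul_smul₀ (detLeadingCoeff_ne_zero n)] at this

theorem detIdeal_eq_span_monic :
    detIdeal K = Ideal.span (Set.range fun n ↦ (detLeadingCoeff K n)⁻¹ • detDeriv K n) := by
  have span_singleton_eq (n : ℕ) : Ideal.span {(detLeadingCoeff K n)⁻¹ • detDeriv K n} =
      Ideal.span {detDeriv K n} := by
    rw [smul_eq_C_mul]
    exact Ideal.span_singleton_mul_left_unit
      ((inv_ne_zero (detLeadingCoeff_ne_zero n)).isUnit.map C) _
  rw [detIdeal, Ideal.span_range_eq_iSup, Ideal.span_range_eq_iSup]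
  simp only [span_singleton_eq]

theorem isSMulRegular_quotient_detIdeal :
    IsSMulRegular (DiffPolyC K ⧸ detIdeal K) (X ((0, 1), 0) : DiffPolyC K) := by
  rw [detIdeal_eq_span_monic]
  refine isSMulRegular_quotient_span_of_hasLeadingMonomial isMonomialLT_spreadLT
    arePairwiseCoprime_detLeading hasLeadingMonomial_detDeriv fun n ↦ ?_
  by_contra hn
  have := position_of_mem_support_detLeading (Finsupp.mem_support_iff.mpr hn)
  simp only [position, Fin.val_zero, Fin.val_one] at this
  omega

end DetIdeal

section Derivation

theorem derivation_iterate_mul {R A : Type*} [CommSemiring R] [CommSemiring A] [Algebra R A]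
    (D : Derivation R A A) (n : ℕ) (a b : A) :
    D^[n] (a * b) = ∑ p ∈ antidiagonal n, n.choose p.1 • (D^[p.1] a * D^[p.2] b) := by
  induction n with
  | zero => simp
  | succ n ih =>
    rw [Finset.sum_antidiagonal_choose_succ_nsmul (fun i j ↦ D^[i] a * D^[j] b) n,
      Function.iterate_succ_apply', ih, map_sum, ← Finset.sum_add_distrib]
    refine Finset.sum_congr rfl fun p hp ↦ ?_
    simp only [map_nsmul, D.leibniz, smul_eq_mul, smul_add, Function.iterate_succ_apply',
      ← Nat.choose_symm_of_eq_add (mem_antidiagonal.mp hp).symm, mul_comm (D^[p.2] b)]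

variable {K : Type} [CommRing K] {δ : K → K} {D : DiffPolyC K → DiffPolyC K}

/-- The derivation `∂` of `C`, bundled; it is only additive since it need not kill `K`. -/
noncomputable def IsDiffStructure.toDerivation (hD : IsDiffStructure δ D) :
    Derivation ℤ (DiffPolyC K) (DiffPolyC K) :=
  .mk' (AddMonoidHom.mk' D hD.2.2.1).toIntLinearMap fun f g ↦ by
    simpa [mul_comm, add_comm] using hD.2.2.2.1 f g

theorem IsDiffStructure.coe_toDerivation (hD : IsDiffStructure δ D) : ⇑hD.toDerivation = D := rfl

theorem IsDiffStructure.iterate_X (hD : IsDiffStructure δ D) (n : ℕ) (c : Fin 2 × Fin 2) :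
    D^[n] (X (c, 0)) = X (c, n) := by
  induction n with
  | zero => rfl
  | succ n ih => rw [Function.iterate_succ_apply', ih, hD.2.2.2.2.2]

theorem IsDiffStructure.iterate_detC_sub_one (hD : IsDiffStructure δ D) (n : ℕ) :
    D^[n] (detC K - 1) = detDeriv K n - if n = 0 then 1 else 0 := by
  have iterate_one : D^[n] 1 = if n = 0 then 1 else 0 := by
    cases n with
    | zero => rfl
    | succ n => rw [← hD.coe_toDerivation, Function.iterate_succ_apply,
        Derivation.map_one_eq_zero, iterate_map_zero, if_neg n.succ_ne_zero]
  rw [← iterate_one, ← hD.coe_toDerivation, iterate_map_sub, detC, iterate_map_sub,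
    derivation_iterate_mul, derivation_iterate_mul, ← Finset.sum_sub_distrib, detDeriv]
  simp only [hD.coe_toDerivation, hD.iterate_X, smul_sub]

/-- The differential ideal `[det - 1]`. -/
noncomputable abbrev detSubOneIdeal (D : DiffPolyC K → DiffPolyC K) : Ideal (DiffPolyC K) :=
  Ideal.span {g : DiffPolyC K | ∃ i : ℕ, g = D^[i] (detC K - 1)}

theorem isHomogeneous_detDeriv (n : ℕ) : (detDeriv K n).IsHomogeneous 2 :=
  .sum _ _ _ fun _ _ ↦ nsmul_mem (S := homogeneousSubmodule DVar K 2)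
    (((isHomogeneous_X K _).mul (isHomogeneous_X K _)).sub
      ((isHomogeneous_X K _).mul (isHomogeneous_X K _))) _

theorem mul_detDeriv_mem (hD : IsDiffStructure δ D) {d : ℕ} {g : DiffPolyC K}
    (hg : g ∈ restrictTotalDegree DVar K d) (n : ℕ) :
    g * detDeriv K n ∈ restrictTotalDegree DVar K d ⊔ (detSubOneIdeal D).restrictScalars K := by
  have split : g * detDeriv K n = (if n = 0 then g else 0) + g * D^[n] (detC K - 1) := by
    rw [hD.iterate_detC_sub_one]
    split_ifs <;> ring
  rw [split]
  refine add_mem (Submodule.mem_sup_left ?_)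
    (Submodule.mem_sup_right (Ideal.mul_mem_left _ _ (Ideal.subset_span ⟨n, rfl⟩)))
  split_ifs
  exacts [hg, zero_mem _]

theorem homogeneousComponent_mem_of_mem_detIdeal (hD : IsDiffStructure δ D) (d : ℕ)
    {f : DiffPolyC K} (hf : f ∈ detIdeal K) :
    homogeneousComponent (d + 1) f ∈
      restrictTotalDegree DVar K d ⊔ (detSubOneIdeal D).restrictScalars K := by
  obtain ⟨c, rfl⟩ := Finsupp.mem_ideal_span_range_iff_exists_finsupp.mp hf
  rw [Finsupp.sum, map_sum]
  refine sum_mem fun n _ ↦ ?_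
  rw [← sum_homogeneousComponent (c n), Finset.sum_mul, map_sum]
  refine sum_mem fun i _ ↦ ?_
  have isHomogeneous_i := homogeneousComponent_isHomogeneous i (c n)
  rw [homogeneousComponent_of_mem (isHomogeneous_i.mul (isHomogeneous_detDeriv n))]
  split_ifs with hi
  · refine mul_detDeriv_mem hD ((mem_restrictTotalDegree _ _ _).mpr ?_) n
    exact isHomogeneous_i.totalDegree_le.trans (by omega)
  · exact zero_mem _

end Derivation

section TaylorEval

variable (K : Type) [CommRing K] {R : Type*} [CommRing R] [Algebra K R]

/-- Evaluation of differential polynomials at a matrix `M` of power series, where the variable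
`c_{ij}^{(n)}` becomes the `n`-th Taylor coefficient `n! · [xⁿ] M i j`. -/
noncomputable def taylorEval (M : Matrix (Fin 2) (Fin 2) (PowerSeries R)) : DiffPolyC K →ₐ[K] R :=
  aeval fun v ↦ v.2.factorial * PowerSeries.coeff v.2 (M v.1.1 v.1.2)

variable {K}

theorem taylorEval_X (M : Matrix (Fin 2) (Fin 2) (PowerSeries R)) (v : DVar) :
    taylorEval K M (X v) = v.2.factorial * PowerSeries.coeff v.2 (M v.1.1 v.1.2) :=
  aeval_X _ v

theorem choose_mul_factorial_mul_factorial_of_mem_antidiagonal {n : ℕ} {p : ℕ × ℕ}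
    (hp : p ∈ antidiagonal n) : n.choose p.1 * p.1.factorial * p.2.factorial = n.factorial := by
  obtain rfl := mem_antidiagonal.mp hp
  rw [Nat.choose_symm_add, Nat.add_choose_mul_factorial_mul_factorial]

theorem factorial_mul_coeff_mul (s t : PowerSeries R) (n : ℕ) :
    n.factorial * PowerSeries.coeff n (s * t) = ∑ p ∈ antidiagonal n, n.choose p.1 •
      ((p.1.factorial * PowerSeries.coeff p.1 s) * (p.2.factorial * PowerSeries.coeff p.2 t)) := by
  rw [PowerSeries.coeff_mul, Finset.mul_sum]
  refine Finset.sum_congr rfl fun p hp ↦ ?_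
  rw [← choose_mul_factorial_mul_factorial_of_mem_antidiagonal hp]
  push_cast [nsmul_eq_mul]
  ring

theorem taylorEval_detDeriv (M : Matrix (Fin 2) (Fin 2) (PowerSeries R)) (n : ℕ) :
    taylorEval K M (detDeriv K n) = n.factorial * PowerSeries.coeff n M.det := by
  rw [Matrix.det_fin_two, map_sub, mul_sub, factorial_mul_coeff_mul, factorial_mul_coeff_mul,
    ← Finset.sum_sub_distrib, detDeriv, map_sum]
  simp only [map_nsmul, map_sub, map_mul, taylorEval_X, smul_sub]

theorem taylorEval_eq_zero_of_mem_detSubOneIdeal {δ : K → K} {D : DiffPolyC K → DiffPolyC K}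
    (hD : IsDiffStructure δ D) {M : Matrix (Fin 2) (Fin 2) (PowerSeries R)} (hM : M.det = 1)
    {f : DiffPolyC K} (hf : f ∈ detSubOneIdeal D) : taylorEval K M f = 0 := by
  suffices detSubOneIdeal D ≤ RingHom.ker (taylorEval K M) from this hf
  rw [Ideal.span_le]
  rintro _ ⟨n, rfl⟩
  rw [SetLike.mem_coe, RingHom.mem_ker, hD.iterate_detC_sub_one, map_sub, taylorEval_detDeriv, hM,
    PowerSeries.coeff_one]
  split_ifs with hn <;> simp [hn]

theorem lift_taylorEval_deltaC (A B : Matrix (Fin 2) (Fin 2) (PowerSeries R)) (f : DiffPolyC K) :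
    Algebra.TensorProduct.lift (taylorEval K A) (taylorEval K B) (fun _ _ ↦ Commute.all _ _)
      (deltaC K f) = taylorEval K (A * B) f := by
  suffices (Algebra.TensorProduct.lift (taylorEval K A) (taylorEval K B)
      (fun _ _ ↦ Commute.all _ _)).comp (deltaC K) = taylorEval K (A * B) from
    DFunLike.congr_fun this f
  refine MvPolynomial.algHom_ext fun v ↦ ?_
  simp only [AlgHom.comp_apply, deltaC, aeval_X, map_sum, map_nsmul, taylorEval_X,
    Algebra.TensorProduct.lift_tmul, Matrix.mul_apply, Finset.mul_sum, factorial_mul_coeff_mul,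
    Finset.Nat.sum_antidiagonal_eq_sum_range_succ_mk]

theorem taylorEval_map {S : Type*} [CommRing S] [Algebra K S] (φ : R →ₐ[K] S)
    (M : Matrix (Fin 2) (Fin 2) (PowerSeries R)) (f : DiffPolyC K) :
    taylorEval K (M.map (PowerSeries.map (φ : R →+* S))) f = φ (taylorEval K M f) := by
  suffices taylorEval K (M.map (PowerSeries.map (φ : R →+* S))) = φ.comp (taylorEval K M) from
    DFunLike.congr_fun this f
  refine MvPolynomial.algHom_ext fun v ↦ ?_
  simp [taylorEval_X]

theorem aeval_mul_left_of_isHomogeneous {σ S : Type*} [CommSemiring S] [Algebra S R] (c : R)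
    (x : σ → R) {f : MvPolynomial σ S} {i : ℕ} (hf : f.IsHomogeneous i) :
    aeval (fun v ↦ c * x v) f = c ^ i * aeval x f := by
  simp only [aeval_def, eval₂_eq, Finset.mul_sum]
  refine Finset.sum_congr rfl fun m hm ↦ ?_
  have degree_m : m.degree = i := by
    rw [← hf (mem_support_iff.mp hm), Finsupp.degree_eq_weight_one]
    rfl
  rw [← degree_m, Finsupp.degree_apply, ← Finset.prod_pow_eq_pow_sum, mul_left_comm,
    ← Finset.prod_mul_distrib]
  simp only [mul_pow]

theorem taylorEval_C_smul (c : R) (M : Matrix (Fin 2) (Fin 2) (PowerSeries R)) {f : DiffPolyC K}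
    {i : ℕ} (hf : f.IsHomogeneous i) :
    taylorEval K (PowerSeries.C c • M) f = c ^ i * taylorEval K M f := by
  rw [taylorEval, taylorEval, ← aeval_mul_left_of_isHomogeneous c _ hf]
  simp only [Matrix.smul_apply, smul_eq_mul, PowerSeries.coeff_C_mul, mul_left_comm]

end TaylorEval

section Elimination

variable (K : Type) [CommRing K]

/-- The polynomials not involving any derivative of `c₂₁`. -/
noncomputable abbrev freeOfC21 : Subalgebra K (DiffPolyC K) := supported K {v : DVar | v.1 ≠ (1, 0)}

/-- The polynomials which, after multiplication by a power of `c₁₂`, become congruent modulo `[det]`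
to a polynomial not involving any derivative of `c₂₁`. -/
noncomputable def eliminable : Subalgebra K (DiffPolyC K) :=
  (((freeOfC21 K).map (Ideal.Quotient.mkₐ K (detIdeal K))).comap
      (Ideal.Quotient.mkₐ K (detIdeal K))).saturation (Submonoid.powers (X ((0, 1), 0))) <| by
    rw [Submonoid.powers_le]
    exact ⟨_, Algebra.subset_adjoin ⟨_, by simp, rfl⟩, rfl⟩

variable {K}

theorem X_mem_eliminable_of_ne {v : DVar} (hv : v.1 ≠ (1, 0)) : X v ∈ eliminable K :=
  Subalgebra.le_saturation ⟨_, Algebra.subset_adjoin ⟨v, hv, rfl⟩, rfl⟩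

theorem detDeriv_mem_eliminable (n : ℕ) : detDeriv K n ∈ eliminable K :=
  have mem_detIdeal : detDeriv K n ∈ detIdeal K := Ideal.subset_span ⟨n, rfl⟩
  Subalgebra.le_saturation ⟨0, zero_mem _, by
    simpa using (Ideal.Quotient.eq_zero_iff_mem.mpr mem_detIdeal).symm⟩

theorem X_one_zero_mem_eliminable (n : ℕ) : X ((1, 0), n) ∈ eliminable K := by
  induction n using Nat.strong_induction_on with | _ n ih
  have solve_for_top : X ((0, 1), 0) * X ((1, 0), n) =
      ∑ p ∈ antidiagonal n, n.choose p.1 • (X ((0, 0), p.1) * X ((1, 1), p.2)) -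
        ∑ p ∈ (antidiagonal n).erase (0, n), n.choose p.1 • (X ((0, 1), p.1) * X ((1, 0), p.2)) -
        detDeriv K n := by
    have zero_n_mem : (0, n) ∈ antidiagonal n := by simp
    simp only [detDeriv, smul_sub, Finset.sum_sub_distrib, ← Finset.add_sum_erase _
      (fun p ↦ n.choose p.1 • (X ((0, 1), p.1) * X ((1, 0), p.2) : DiffPolyC K)) zero_n_mem,
      Nat.choose_zero_right, one_smul]
    ring
  refine Subalgebra.mem_saturation_of_mul_mem_left (x := X ((0, 1), 0)) ?_
    (Submonoid.mem_powers _)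
  change _ ∈ eliminable K
  rw [solve_for_top]
  refine sub_mem (sub_mem (sum_mem fun p _ ↦ ?_) (sum_mem fun p hp ↦ ?_))
    (detDeriv_mem_eliminable n)
  · exact nsmul_mem
      (mul_mem (X_mem_eliminable_of_ne (by simp)) (X_mem_eliminable_of_ne (by simp))) _
  · refine nsmul_mem (mul_mem (X_mem_eliminable_of_ne (by simp)) (ih p.2 ?_)) _
    obtain ⟨hne, hp⟩ := Finset.mem_erase.mp hp
    rw [mem_antidiagonal] at hp
    have : p.1 ≠ 0 := fun h ↦ hne (Prod.ext h (by omega))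
    omega

theorem eliminable_eq_top : eliminable K = ⊤ := by
  rw [eq_top_iff, ← adjoin_range_X, Algebra.adjoin_le_iff]
  rintro _ ⟨⟨c, n⟩, rfl⟩
  obtain rfl | hc := eq_or_ne c (1, 0)
  · exact X_one_zero_mem_eliminable n
  · exact X_mem_eliminable_of_ne hc

theorem exists_pow_mul_sub_mem_detIdeal (f : DiffPolyC K) :
    ∃ N : ℕ, ∃ g ∈ freeOfC21 K, X ((0, 1), 0) ^ N * f - g ∈ detIdeal K := by
  have f_mem : f ∈ eliminable K := by simp [eliminable_eq_top]
  obtain ⟨_, ⟨N, rfl⟩, g, hg, congr⟩ := Subalgebra.mem_saturation_iff.mp f_mem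
  exact ⟨N, g, hg, Ideal.Quotient.mk_eq_mk_iff_sub_mem _ _ |>.mp congr.symm⟩

end Elimination

theorem mem_detIdeal_of_map_eq_zero {K : Type} [Field K] [CharZero K] {F : Type*} [CommRing F]
    [Algebra K F] {φ ι : DiffPolyC K →ₐ[K] F} (hι : Function.Injective ι)
    (hφ : ∀ n, φ (detDeriv K n) = 0)
    (hφι : ∀ v : DVar, v.1 ≠ (1, 0) → φ (X v) = ι (X v)) {f : DiffPolyC K}
    (hf : φ f = 0) : f ∈ detIdeal K := by
  obtain ⟨N, g, hg, congr⟩ := exists_pow_mul_sub_mem_detIdeal f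
  have detIdeal_le : detIdeal K ≤ RingHom.ker φ :=
    Ideal.span_le.mpr (Set.range_subset_iff.mpr hφ)
  have freeOfC21_le : freeOfC21 K ≤ AlgHom.equalizer φ ι :=
    Algebra.adjoin_le (Set.image_subset_iff.mpr hφι)
  have g_eq_zero : g = 0 := by
    have : φ (X ((0, 1), 0) ^ N * f - g) = 0 := detIdeal_le congr
    rw [map_sub, map_mul, hf, mul_zero, zero_sub, neg_eq_zero, freeOfC21_le hg] at this
    exact (map_eq_zero_iff ι hι).mp this
  rw [g_eq_zero, sub_zero] at congr
  exact mem_of_isSMulRegular_quotient_of_smul_mem (isSMulRegular_quotient_detIdeal.pow N) congr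

theorem sub_homogeneousComponent_mem_restrictTotalDegree {σ R : Type*} [CommRing R] {d : ℕ}
    {f : MvPolynomial σ R} (hf : f ∈ restrictTotalDegree σ R (d + 1)) :
    f - homogeneousComponent (d + 1) f ∈ restrictTotalDegree σ R d := by
  rw [mem_restrictTotalDegree] at hf ⊢
  refine Finset.sup_le fun m hm ↦ ?_
  rw [mem_support_iff, coeff_sub, coeff_homogeneousComponent] at hm
  split_ifs at hm with hdegree
  · simp at hm
  · have := le_totalDegree (mem_support_iff.mpr (sub_zero (coeff m f) ▸ hm))
    have degree_eq : m.degree = m.sum fun _ e ↦ e := rfl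
    omega

theorem tensorSub_le_comap_lift {K : Type} [CommRing K] {S : Type*} [CommRing S] [Algebra K S]
    {φ ψ : DiffPolyC K →ₐ[K] S} {p q : Submodule K (DiffPolyC K)} {Z : Submodule K S}
    (h : ∀ a ∈ p, ∀ b ∈ q, φ a * ψ b ∈ Z) :
    tensorSub p q ≤ Z.comap
      (Algebra.TensorProduct.lift φ ψ fun _ _ ↦ Commute.all _ _).toLinearMap := by
  rw [tensorSub, Submodule.span_le]
  rintro _ ⟨a, ha, b, hb, rfl⟩
  simpa using h a ha b hb

open TensorProduct in
/-- The submodule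
`C_{≤d+1} ⊗ C_{≤d} + C_{≤d} ⊗ C_{≤d+1} + [det-1] ⊗ C + C ⊗ [det-1]` of `C ⊗ C`. -/
noncomputable abbrev lowerTensors {K : Type} [CommRing K] (D : DiffPolyC K → DiffPolyC K) (d : ℕ) :
    Submodule K (DiffPolyC K ⊗[K] DiffPolyC K) :=
  tensorSub (restrictTotalDegree DVar K (d + 1)) (restrictTotalDegree DVar K d) ⊔
    tensorSub (restrictTotalDegree DVar K d) (restrictTotalDegree DVar K (d + 1)) ⊔
    tensorSub ((detSubOneIdeal D).restrictScalars K) ⊤ ⊔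
    tensorSub ⊤ ((detSubOneIdeal D).restrictScalars K)

section Degeneration

variable {K : Type} [CommRing K] {O : Type*} [CommRing O] [Algebra K O]
  (L : Type*) [Field L] [Algebra K L] [Algebra O L]

/-- The matrix `c⁻¹ M` over the field `L ⊇ O`. -/
noncomputable def rescale (c : O) (M : Matrix (Fin 2) (Fin 2) (PowerSeries O)) :
    Matrix (Fin 2) (Fin 2) (PowerSeries L) :=
  PowerSeries.C (algebraMap O L c)⁻¹ • M.map (PowerSeries.map (algebraMap O L))

theorem rescale_mul_rescale (b c : O) (M N : Matrix (Fin 2) (Fin 2) (PowerSeries O)) :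
    rescale L b M * rescale L c N = rescale L (b * c) (M * N) := by
  simp only [rescale, Matrix.smul_mul, Matrix.mul_smul, smul_smul, Matrix.map_mul, map_mul,
    mul_inv_rev]

theorem det_rescale [FaithfulSMul O L] {c : O} (hc : c ≠ 0)
    {M : Matrix (Fin 2) (Fin 2) (PowerSeries O)} (hM : M.det = PowerSeries.C (c ^ 2)) :
    (rescale L c M).det = 1 := by
  have hc' : algebraMap O L c ≠ 0 := by simpa
  have det_map : (M.map (PowerSeries.map (algebraMap O L))).det =
      PowerSeries.C (algebraMap O L c ^ 2) := by
    rw [← RingHom.mapMatrix_apply, ← RingHom.map_det, hM, PowerSeries.map_C, map_pow]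
  rw [rescale, Matrix.det_smul, Fintype.card_fin, det_map, ← map_pow, ← map_mul, inv_pow,
    inv_mul_cancel₀ (pow_ne_zero 2 hc'), map_one]

variable [IsScalarTower K O L]

theorem pow_mul_taylorEval_rescale [FaithfulSMul O L] {c : O} (hc : c ≠ 0)
    (M : Matrix (Fin 2) (Fin 2) (PowerSeries O)) {i : ℕ} {f : DiffPolyC K}
    (hf : f.IsHomogeneous i) :
    algebraMap O L c ^ i * taylorEval K (rescale L c M) f = algebraMap O L (taylorEval K M f) := by
  have hc' : algebraMap O L c ≠ 0 := by simpa
  rw [rescale, taylorEval_C_smul _ _ hf, inv_pow, mul_inv_cancel_left₀ (pow_ne_zero i hc')]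
  exact taylorEval_map (IsScalarTower.toAlgHom K O L) M f

variable (K) in
/-- The fractions in `L` with denominator `c`, that is, the elements `x` with `c * x ∈ O`. -/
noncomputable def fractionsOver (c : O) : Submodule K L :=
  (LinearMap.range (IsScalarTower.toAlgHom K O L).toLinearMap).comap
    (LinearMap.mulLeft K (algebraMap O L c))

variable {L}

theorem mem_fractionsOver {c : O} {x : L} :
    x ∈ fractionsOver K L c ↔ ∃ y : O, algebraMap O L y = algebraMap O L c * x := Iff.rfl

theorem mul_mem_fractionsOver {b c : O} {x y : L} (hx : x ∈ fractionsOver K L b)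
    (hy : y ∈ fractionsOver K L c) : x * y ∈ fractionsOver K L (b * c) := by
  obtain ⟨x', hx'⟩ := hx
  obtain ⟨y', hy'⟩ := hy
  exact ⟨x' * y', by simp_all [mul_assoc, mul_left_comm]⟩

theorem fractionsOver_le_of_dvd {b c : O} (h : b ∣ c) :
    fractionsOver K L b ≤ fractionsOver K L c := by
  obtain ⟨a, rfl⟩ := h
  rintro x ⟨y, hy⟩
  exact ⟨a * y, by simp_all [mul_comm, mul_left_comm]⟩

variable [FaithfulSMul O L] {t : O}

theorem taylorEval_rescale_mem_fractionsOver (ht : t ≠ 0)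
    (M : Matrix (Fin 2) (Fin 2) (PowerSeries O)) {d : ℕ} {f : DiffPolyC K}
    (hf : f ∈ restrictTotalDegree DVar K d) :
    taylorEval K (rescale L t M) f ∈ fractionsOver K L (t ^ d) := by
  rw [← sum_homogeneousComponent f, map_sum]
  refine sum_mem fun i hi ↦ fractionsOver_le_of_dvd (pow_dvd_pow t (m := i) ?_) ?_
  · have := (mem_restrictTotalDegree _ _ _).mp hf
    have := Finset.mem_range.mp hi
    omega
  · exact mem_fractionsOver.mpr ⟨taylorEval K M (homogeneousComponent i f), by
      rw [map_pow, pow_mul_taylorEval_rescale L ht M (homogeneousComponent_isHomogeneous i f)]⟩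

theorem exists_pow_mul_taylorEval_rescale (ht : t ≠ 0)
    (M : Matrix (Fin 2) (Fin 2) (PowerSeries O)) {d : ℕ} {f : DiffPolyC K}
    (hf : f ∈ restrictTotalDegree DVar K (d + 1)) :
    ∃ y : O, algebraMap O L t ^ (d + 1) * taylorEval K (rescale L t M) f =
      algebraMap O L (taylorEval K M (homogeneousComponent (d + 1) f) + t * y) := by
  obtain ⟨y, hy⟩ := mem_fractionsOver.mp <| taylorEval_rescale_mem_fractionsOver (L := L) ht M
    (sub_homogeneousComponent_mem_restrictTotalDegree hf)
  refine ⟨y, ?_⟩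
  have top := pow_mul_taylorEval_rescale L ht M (homogeneousComponent_isHomogeneous (d + 1) f)
  rw [map_pow, map_sub, mul_sub] at hy
  rw [map_add, map_mul, hy, ← top]
  ring

variable {δ : K → K} {D : DiffPolyC K → DiffPolyC K}
  {A B : Matrix (Fin 2) (Fin 2) (PowerSeries O)} {d : ℕ} {f : DiffPolyC K}

theorem taylorEval_rescale_mul_rescale_mem_fractionsOver (hD : IsDiffStructure δ D) (ht : t ≠ 0)
    (hA : A.det = PowerSeries.C (t ^ 2)) (hB : B.det = PowerSeries.C (t ^ 2))
    (hΔ : deltaC K f ∈ lowerTensors D d) :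
    taylorEval K (rescale L t A * rescale L t B) f ∈ fractionsOver K L (t ^ (2 * d + 1)) := by
  rw [← lift_taylorEval_deltaC]
  suffices lowerTensors D d ≤ (fractionsOver K L (t ^ (2 * d + 1))).comap
      (Algebra.TensorProduct.lift (taylorEval K (rescale L t A)) (taylorEval K (rescale L t B))
        fun _ _ ↦ Commute.all _ _).toLinearMap from this hΔ
  have mul_mem_of_degree_add {i j : ℕ} (hij : 2 * d + 1 = i + j) :
      ∀ a ∈ restrictTotalDegree DVar K i, ∀ b ∈ restrictTotalDegree DVar K j,
        taylorEval K (rescale L t A) a * taylorEval K (rescale L t B) b ∈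
          fractionsOver K L (t ^ (2 * d + 1)) := by
    intro a ha b hb
    rw [hij, pow_add]
    exact mul_mem_fractionsOver (taylorEval_rescale_mem_fractionsOver ht A ha)
      (taylorEval_rescale_mem_fractionsOver ht B hb)
  refine sup_le (sup_le (sup_le ?_ ?_) ?_) ?_ <;> refine tensorSub_le_comap_lift ?_
  · exact mul_mem_of_degree_add (by ring)
  · exact mul_mem_of_degree_add (by ring)
  · intro a ha b _
    rw [taylorEval_eq_zero_of_mem_detSubOneIdeal hD (det_rescale L ht hA) ha, zero_mul]
    exact zero_mem _
  · intro a _ b hb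
    rw [taylorEval_eq_zero_of_mem_detSubOneIdeal hD (det_rescale L ht hB) hb, mul_zero]
    exact zero_mem _

theorem dvd_taylorEval_homogeneousComponent [IsDomain O] (hD : IsDiffStructure δ D) (ht : t ≠ 0)
    (hA : A.det = PowerSeries.C (t ^ 2)) (hB : B.det = PowerSeries.C (t ^ 2))
    (hf : f ∈ restrictTotalDegree DVar K (d + 1)) (hΔ : deltaC K f ∈ lowerTensors D d) :
    t ∣ taylorEval K (A * B) (homogeneousComponent (d + 1) f) := by
  obtain ⟨z, hz⟩ := mem_fractionsOver.mp <|
    taylorEval_rescale_mul_rescale_mem_fractionsOver (L := FractionRing O) hD ht hA hB hΔ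
  obtain ⟨y, hy⟩ := exists_pow_mul_taylorEval_rescale (L := FractionRing O)
    (mul_ne_zero ht ht) (A * B) hf
  rw [rescale_mul_rescale] at hz
  have eq_mul : taylorEval K (A * B) (homogeneousComponent (d + 1) f) + t * t * y = t * z := by
    apply FaithfulSMul.algebraMap_injective O (FractionRing O)
    rw [← hy, map_mul, map_mul, hz, map_pow]
    ring
  exact ⟨z - t * y, by linear_combination eq_mul⟩

end Degeneration

section SingularMatrix

variable {K : Type} [CommRing K] {δ : K → K} {D : DiffPolyC K → DiffPolyC K} {d : ℕ}
  {f : DiffPolyC K}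

open Polynomial in
-- The singular matrix is the value at `t = 0` of `!![1, 0; y, t²] * !![a, b; -t² bInv, 0]`, in
-- which both factors have determinant `t²`.
theorem taylorEval_singular_eq_zero {F : Type*} [CommRing F] [IsDomain F] [Algebra K F]
    (hD : IsDiffStructure δ D) (hf : f ∈ restrictTotalDegree DVar K (d + 1))
    (hΔ : deltaC K f ∈ lowerTensors D d) (a y : PowerSeries F) {b bInv : PowerSeries F}
    (hb : b * bInv = 1) :
    taylorEval K !![a, b; y * a, y * b] (homogeneousComponent (d + 1) f) = 0 := by
  let const : PowerSeries F →+* PowerSeries F[X] := PowerSeries.map Polynomial.C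
  let t2 : PowerSeries F[X] := PowerSeries.C (Polynomial.X ^ 2)
  let A : Matrix (Fin 2) (Fin 2) (PowerSeries F[X]) := !![1, 0; const y, t2]
  let B : Matrix (Fin 2) (Fin 2) (PowerSeries F[X]) := !![const a, const b; -t2 * const bInv, 0]
  have det_A : A.det = t2 := by simp [A, Matrix.det_fin_two_of]
  have det_B : B.det = t2 := by
    have const_b : const b * const bInv = 1 := by rw [← map_mul, hb, map_one]
    rw [Matrix.det_fin_two_of]
    linear_combination t2 * const_b
  let evalZero : F[X] →ₐ[K] F := (Polynomial.aeval 0).restrictScalars K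
  have map_const (s : PowerSeries F) : PowerSeries.map (evalZero : F[X] →+* F) (const s) = s := by
    ext
    simp [const, evalZero]
  have map_t2 : PowerSeries.map (evalZero : F[X] →+* F) t2 = 0 := by simp [t2, evalZero]
  have map_A_mul_B : (A * B).map (PowerSeries.map (evalZero : F[X] →+* F)) =
      !![a, b; y * a, y * b] := by
    ext1 i j
    fin_cases i <;> fin_cases j <;> simp [A, B, map_const, map_t2]
  obtain ⟨g, hg⟩ := dvd_taylorEval_homogeneousComponent hD Polynomial.X_ne_zero det_A det_B hf hΔ
  rw [← map_A_mul_B, taylorEval_map, hg]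
  simp [evalZero]

variable {F : Type*} [Field F]

/-- The power series over `F` whose `n`-th Taylor coefficient is `φ c^{(n)}`. -/
noncomputable def taylorSeries (φ : DiffPolyC K → F) (c : Fin 2 × Fin 2) : PowerSeries F :=
  PowerSeries.mk fun n ↦ (n.factorial : F)⁻¹ * φ (X (c, n))

theorem factorial_mul_coeff_taylorSeries [CharZero F] (φ : DiffPolyC K → F) (c : Fin 2 × Fin 2)
    (n : ℕ) :
    n.factorial * PowerSeries.coeff n (taylorSeries φ c) = φ (X (c, n)) := by
  rw [taylorSeries, PowerSeries.coeff_mk,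
    mul_inv_cancel_left₀ (Nat.cast_ne_zero.mpr n.factorial_ne_zero)]

end SingularMatrix

theorem homogeneousComponent_mem_detIdeal {K : Type} [Field K] [CharZero K] {δ : K → K}
    {D : DiffPolyC K → DiffPolyC K} {d : ℕ} {f : DiffPolyC K} (hD : IsDiffStructure δ D)
    (hf : f ∈ restrictTotalDegree DVar K (d + 1)) (hΔ : deltaC K f ∈ lowerTensors D d) :
    homogeneousComponent (d + 1) f ∈ detIdeal K := by
  let ι := IsScalarTower.toAlgHom K (DiffPolyC K) (FractionRing (DiffPolyC K))
  have ι_injective : Function.Injective ι := IsFractionRing.injective _ _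
  have : CharZero (FractionRing (DiffPolyC K)) :=
    charZero_of_injective_algebraMap (algebraMap K _).injective
  let a := taylorSeries ι (0, 0)
  let b := taylorSeries ι (0, 1)
  let c := taylorSeries ι (1, 1)
  have mul_inv_b : b * b⁻¹ = 1 := by
    refine PowerSeries.mul_inv_cancel _ ?_
    have coeff_zero_b := factorial_mul_coeff_taylorSeries ι (0, 1) 0
    rw [Nat.factorial_zero, Nat.cast_one, one_mul,
      PowerSeries.coeff_zero_eq_constantCoeff_apply] at coeff_zero_b
    rw [coeff_zero_b, map_ne_zero_iff ι ι_injective]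
    exact X_ne_zero _
  let M := !![a, b; c * b⁻¹ * a, c * b⁻¹ * b]
  have det_M : M.det = 0 := by
    rw [Matrix.det_fin_two_of]
    ring
  refine mem_detIdeal_of_map_eq_zero (φ := taylorEval K M) ι_injective (fun n ↦ ?_) ?_
    (taylorEval_singular_eq_zero hD hf hΔ a (c * b⁻¹) mul_inv_b)
  · rw [taylorEval_detDeriv, det_M, map_zero, mul_zero]
  · have c_mul : c * b⁻¹ * b = c := by rw [mul_assoc, mul_comm b⁻¹, mul_inv_b, mul_one]
    rintro ⟨⟨i, j⟩, n⟩ hij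
    rw [taylorEval_X, ← factorial_mul_coeff_taylorSeries ι]
    fin_cases i <;> fin_cases j <;> simp_all [M, a, b, c]

/-- If `f ∈ C_{≤d}` and `Δ_C(f)` lies in
`C_{≤d} ⊗ C_{≤d−1} + C_{≤d−1} ⊗ C_{≤d} + [det−1] ⊗ C + C ⊗ [det−1]`,
then `f ∈ C_{≤d−1} + [det−1]`. -/
theorem mem_le_degree_add_detIdeal {K : Type} [Field K] [CharZero K]
    (δ : K → K) (D : DiffPolyC K → DiffPolyC K)
    (hD : IsDiffStructure δ D)
    (d : ℕ) (f : DiffPolyC K)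
    (hf : f ∈ restrictTotalDegree DVar K d)
    (hΔ : deltaC K f ∈
      tensorSub (restrictTotalDegree DVar K d) (restrictTotalDegree DVar K (d - 1)) ⊔
      tensorSub (restrictTotalDegree DVar K (d - 1)) (restrictTotalDegree DVar K d) ⊔
      tensorSub ((Ideal.span {g : DiffPolyC K | ∃ i : ℕ, g = D^[i] (detC K - 1)}).restrictScalars K) ⊤ ⊔
      tensorSub ⊤ ((Ideal.span {g : DiffPolyC K | ∃ i : ℕ, g = D^[i] (detC K - 1)}).restrictScalars K)) :
    f ∈ restrictTotalDegree DVar K (d - 1) ⊔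
      (Ideal.span {g : DiffPolyC K | ∃ i : ℕ, g = D^[i] (detC K - 1)}).restrictScalars K := by
  rcases d with _ | d
  · exact Submodule.mem_sup_left hf
  · rw [Nat.add_sub_cancel] at hΔ ⊢
    have top := homogeneousComponent_mem_of_mem_detIdeal hD d
      (homogeneousComponent_mem_detIdeal hD hf hΔ)
    rw [homogeneousComponent_of_mem (homogeneousComponent_isHomogeneous _ _), if_pos rfl] at top
    rw [← sub_add_cancel f (homogeneousComponent (d + 1) f)]
    exact add_mem
      (Submodule.mem_sup_left (sub_homogeneousComponent_mem_restrictTotalDegree hf)) top
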